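/- In the symmetric group on the n×n array positions with n ≥ 10, for 3 ≤ i,j ≤ n define X_{ij} = π_{i,j} π_{i−1,j} π_{i−2,j} π_{i−1,j} and Y_{ij} = X_{i,j} X_{i,j−1} X_{i,j−2} X_{i,j−1} (products applied left to right). Then Y_{ij} is the permutation that transposes the (i,j)-element with the (1,1)-element and transposes the (i,1)-element with the (1,j)-element, fixing all other elements. -/

import Mathlib

/-- Rotation of the upper-left `r × s` rectangle (1-based coordinates). -/
def upperLeftRot (r s : ℕ) (p : ℕ × ℕ) : ℕ × ℕ :=
  if p.1 ≤ r ∧ p.2 ≤ s then (r + 1 - p.1, s + 1 - p.2) else p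

/-- `X_{ij} = π_{i,j} π_{i-1,j} π_{i-2,j} π_{i-1,j}` (applied left to right). -/
def Xword (i j : ℕ) (p : ℕ × ℕ) : ℕ × ℕ :=
  upperLeftRot (i - 1) j (upperLeftRot (i - 2) j (upperLeftRot (i - 1) j (upperLeftRot i j p)))

/-- `Y_{ij} = X_{i,j} X_{i,j-1} X_{i,j-2} X_{i,j-1}` (applied left to right). -/
def Yword (i j : ℕ) (p : ℕ × ℕ) : ℕ × ℕ :=
  Xword i (j - 1) (Xword i (j - 2) (Xword i (j - 1) (Xword i j p)))

theorem Xword_closed (i j r s : ℕ) (hi : 3 ≤ i) (hr : 1 ≤ r) (hs : 1 ≤ s) :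
    Xword i j (r, s) =
      if s ≤ j ∧ r = 1 then (i, j + 1 - s)
      else if s ≤ j ∧ r = i then (1, j + 1 - s)
      else (r, s) := by
  by_cases hsj : s ≤ j
  · have h2 : j + 1 - s ≤ j := by omega
    have h3 : j + 1 - (j + 1 - s) = s := by omega
    by_cases h1 : r = 1
    · subst h1
      have a1 : 1 ≤ i := by omega
      have a2 : ¬ i ≤ i - 1 := by omega
      have a3 : ¬ i ≤ i - 2 := by omega
      simp [Xword, upperLeftRot, hsj, a1, a2, a3]
    · by_cases hri : r ≤ i
      · have b1 : i + 1 - r ≤ i - 1 := by omega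
        have b2 : i - 1 + 1 - (i + 1 - r) = r - 1 := by omega
        by_cases he : r = i
        · subst he
          have c1 : ¬ r - 1 ≤ r - 2 := by omega
          have c2 : r - 1 + 1 - (r - 1) = 1 := by omega
          have c3 : 1 ≤ r - 1 := by omega
          simp [Xword, upperLeftRot, hsj, h1, h2, h3, c1, c2, c3]
        · have c1 : r - 1 ≤ i - 2 := by omega
          have c2 : i - 2 + 1 - (r - 1) ≤ i - 1 := by omega
          have c3 : i - 1 + 1 - (i - 2 + 1 - (r - 1)) = r := by omega
          simp only [Xword, upperLeftRot, hsj, h1, h2, h3, hri, he, b1, b2, c1, c2, c3,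
            and_self, and_false, if_true, if_false]
      · have a1 : ¬ r ≤ i - 1 := by omega
        have a2 : ¬ r ≤ i - 2 := by omega
        have a3 : r ≠ i := by omega
        simp [Xword, upperLeftRot, h1, hri, a1, a2, a3]
  · simp [Xword, upperLeftRot, hsj]

theorem Xword_four (i j s a b : ℕ) (hj : 3 ≤ j) (hs : 1 ≤ s)
    (Ha : ∀ k t u : ℕ, 1 ≤ t → t ≤ k → u = k + 1 - t → Xword i k (a, t) = (b, u))
    (Hb : ∀ k t u : ℕ, 1 ≤ t → t ≤ k → u = k + 1 - t → Xword i k (b, t) = (a, u))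
    (Fa : ∀ k t : ℕ, 1 ≤ t → k < t → Xword i k (a, t) = (a, t))
    (Fb : ∀ k t : ℕ, 1 ≤ t → k < t → Xword i k (b, t) = (b, t)) :
    Xword i (j - 1) (Xword i (j - 2) (Xword i (j - 1) (Xword i j (a, s)))) =
      if s = 1 then (b, j) else if s = j then (b, 1) else (a, s) := by
  by_cases h1 : s = 1
  · rw [if_pos h1, Ha j s j hs (by omega) (by omega), Fb (j - 1) j (by omega) (by omega),
      Fb (j - 2) j (by omega) (by omega), Fb (j - 1) j (by omega) (by omega)]
  rw [if_neg h1]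
  by_cases h2 : s = j
  · rw [if_pos h2, Ha j s 1 hs (by omega) (by omega),
      Hb (j - 1) 1 (j - 1) (by omega) (by omega) (by omega),
      Fa (j - 2) (j - 1) (by omega) (by omega),
      Ha (j - 1) (j - 1) 1 (by omega) (by omega) (by omega)]
  rw [if_neg h2]
  by_cases h3 : s ≤ j
  · rw [Ha j s (j + 1 - s) hs h3 rfl,
      Hb (j - 1) (j + 1 - s) (s - 1) (by omega) (by omega) (by omega),
      Ha (j - 2) (s - 1) (j - s) (by omega) (by omega) (by omega),
      Hb (j - 1) (j - s) s (by omega) (by omega) (by omega)]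
  · rw [Fa j s hs (by omega), Fa (j - 1) s hs (by omega), Fa (j - 2) s hs (by omega),
      Fa (j - 1) s hs (by omega)]

/-- For `n ≥ 10` and `3 ≤ i,j ≤ n`, `Y_{ij}` transposes `(i,j)` with `(1,1)` and
`(i,1)` with `(1,j)`, fixing all other positions of the `n × n` array. -/
theorem Yword_eq (n i j : ℕ) (hn : 10 ≤ n) (hi : 3 ≤ i ∧ i ≤ n) (hj : 3 ≤ j ∧ j ≤ n)
    (r s : ℕ) (hr1 : 1 ≤ r) (hrn : r ≤ n) (hs1 : 1 ≤ s) (hsn : s ≤ n) :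
    Yword i j (r, s) =
      if (r, s) = (i, j) then (1, 1)
      else if (r, s) = (1, 1) then (i, j)
      else if (r, s) = (i, 1) then (1, j)
      else if (r, s) = (1, j) then (i, 1)
      else (r, s) := by
  obtain ⟨hi, -⟩ := hi
  obtain ⟨hj, -⟩ := hj
  have hi1 : 1 ≤ i := by omega
  have hne : i ≠ 1 := by omega
  have hne' : (1 : ℕ) ≠ i := by omega
  have H1 : ∀ k t u : ℕ, 1 ≤ t → t ≤ k → u = k + 1 - t → Xword i k (1, t) = (i, u) := by
    intro k t u ht htk hu
    rw [Xword_closed i k 1 t hi le_rfl ht, hu]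
    simp [htk]
  have Hi : ∀ k t u : ℕ, 1 ≤ t → t ≤ k → u = k + 1 - t → Xword i k (i, t) = (1, u) := by
    intro k t u ht htk hu
    rw [Xword_closed i k i t hi hi1 ht, hu]
    simp [hne, htk]
  have F : ∀ a : ℕ, 1 ≤ a → ∀ k t : ℕ, 1 ≤ t → k < t → Xword i k (a, t) = (a, t) := by
    intro a ha k t ht hkt
    rw [Xword_closed i k a t hi ha ht]
    simp [not_le.mpr hkt]
  have X0 : ∀ k t : ℕ, 1 ≤ t → r ≠ 1 → r ≠ i → Xword i k (r, t) = (r, t) := by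
    intro k t ht h1 h2
    rw [Xword_closed i k r t hi hr1 ht]
    simp [h1, h2]
  unfold Yword
  by_cases h1 : r = 1
  · subst h1
    rw [Xword_four i j s 1 i hj hs1 H1 Hi (F 1 le_rfl) (F i hi1)]
    simp [hne']
  · by_cases h2 : r = i
    · subst h2
      rw [Xword_four r j s r 1 hj hs1 Hi H1 (F r hi1) (F 1 le_rfl)]
      simp only [Prod.mk.injEq, hne, true_and, false_and, if_false]
      have hj1 : j ≠ 1 := by omega
      by_cases h3 : s = 1
      · simp [h3, hj1.symm]
      · simp [h3]
    · rw [X0 _ _ hs1 h1 h2, X0 _ _ hs1 h1 h2, X0 _ _ hs1 h1 h2, X0 _ _ hs1 h1 h2]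
      simp [h1, h2]
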